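/- arXiv:1408.1284 — 6 statements merged into one kernel-verified Lean document; each statement's English description precedes it below -/
import Mathlib

section
/- For any two tuples (f^{(1)},…,f^{(s)}) and (g^{(1)},…,g^{(s)}) of linearized polynomials over F_{q^m} with deg_q(f^{(j)}) < k^{(j)} and deg_q(g^{(j)}) < k^{(j)} for all j, such that f^{(j)} ≠ g^{(j)} for at least one j, the associated codewords V and V' satisfy d_S(V, V') ≥ 2(n_t − max_{1≤j≤s} k^{(j)} + 1). -/
/-- `P` is a linearized polynomial with respect to `q`: every nonzero coefficient
sits at an index that is a power of `q`, i.e. `P = Σ p_i x^(q^i)`. -/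
def IsLinearized (q : ℕ) {K : Type*} [Field K] (P : Polynomial K) : Prop :=
  ∀ n : ℕ, P.coeff n ≠ 0 → ∃ i : ℕ, n = q ^ i

/-- The subspace distance `d_S(U,V) = dim(U+V) − dim(U∩V)`. -/
noncomputable def subspaceDist {Fq W : Type*} [Field Fq] [AddCommGroup W] [Module Fq W]
    (U V : Submodule Fq W) : ℕ :=
  Module.finrank Fq ↥(U ⊔ V) - Module.finrank Fq ↥(U ⊓ V)

/-!
Both codewords are spanned by families with the same linearly independent projection
`(α i)` to the first coordinate. Hence the difference vectors, which vanish in that coordinate,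
span a complement of each codeword in `V + V'`, and the subspace distance is exactly twice the
dimension of their span. Projecting to a component `j` with `f j ≠ g j` can only shrink this
span, and sends it to the image of `⟨α i⟩` under the linear map induced by `f j - g j`. A nonzero
linearized polynomial of `q`-degree less than `k` has fewer than `q ^ k` roots, so the kernel of
that map has dimension less than `k`.
-/

open Module Polynomial Set Submodule

section LinearAlgebra

variable {V W M ι : Type*} [AddCommGroup V] [AddCommGroup W] [AddCommGroup M]

theorem span_range_sup_span_range_sub {R : Type*} [Ring R] [Module R W] (u v : ι → W) :
    span R (range u) ⊔ span R (range (u - v)) = span R (range u) ⊔ span R (range v) := by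
  have mem_left (w : ι → W) (i : ι) : u i ∈ span R (range u) ⊔ span R (range w) :=
    mem_sup_left (subset_span (mem_range_self i))
  have mem_right (w : ι → W) (i : ι) : w i ∈ span R (range u) ⊔ span R (range w) :=
    mem_sup_right (subset_span (mem_range_self i))
  apply le_antisymm <;> refine sup_le le_sup_left (span_le.2 ?_) <;> rintro _ ⟨i, rfl⟩
  · exact sub_mem (mem_left v i) (mem_right v i)
  · simpa using sub_mem (mem_left (u - v) i) (mem_right (u - v) i)

theorem disjoint_span_range_sub {R : Type*} [Ring R] [Module R W] [Module R M]
    {p : W →ₗ[R] M} {u v : ι → W}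
    (hu : LinearIndependent R (p ∘ u)) (huv : p ∘ u = p ∘ v) :
    Disjoint (span R (range u)) (span R (range (u - v))) := by
  refine (range_ker_disjoint hu).mono_right (span_le.2 ?_)
  rintro _ ⟨i, rfl⟩
  simpa [sub_eq_zero] using congrFun huv i

theorem subspaceDist_span_range_eq {F : Type*} [Field F] [Module F W] [Module F M] [Finite ι]
    {p : W →ₗ[F] M} {u v : ι → W}
    (hu : LinearIndependent F (p ∘ u)) (huv : p ∘ u = p ∘ v) :
    subspaceDist (span F (range u)) (span F (range v)) =
      2 * finrank F (span F (range (u - v))) := by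
  have := Fintype.ofFinite ι
  have finite_span (w : ι → W) : FiniteDimensional F (span F (range w)) :=
    FiniteDimensional.span_of_finite F (finite_range w)
  have hU : finrank F (span F (range u)) = Fintype.card ι :=
    finrank_span_eq_card (LinearIndependent.of_comp p hu)
  have hV : finrank F (span F (range v)) = Fintype.card ι :=
    finrank_span_eq_card (LinearIndependent.of_comp p (huv ▸ hu))
  have hsup : finrank F ↥(span F (range u) ⊔ span F (range v)) =
      finrank F (span F (range u)) + finrank F (span F (range (u - v))) := by
    rw [← span_range_sup_span_range_sub, ← finrank_sup_add_finrank_inf_eq,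
      (disjoint_span_range_sub hu huv).eq_bot, finrank_bot, add_zero]
  have hinf := finrank_sup_add_finrank_inf_eq (span F (range u)) (span F (range v))
  unfold subspaceDist
  omega

theorem finrank_le_finrank_map_add_finrank_ker {F : Type*} [DivisionRing F] [Module F V]
    [Module F W] (L : V →ₗ[F] W) [FiniteDimensional F L.ker] (A : Submodule F V)
    [FiniteDimensional F A] :
    finrank F A ≤ finrank F (A.map L) + finrank F L.ker := by
  have hker : finrank F (L.domRestrict A).ker ≤ finrank F L.ker := by
    rw [LinearMap.ker_domRestrict, ← finrank_map_subtype_eq, map_comap_subtype]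
    exact finrank_mono inf_le_right
  rw [← LinearMap.finrank_range_add_finrank_ker (L.domRestrict A), LinearMap.range_domRestrict]
  exact Nat.add_le_add_left hker _

end LinearAlgebra

namespace IsLinearized

theorem sub {q : ℕ} {K : Type*} [Field K] {P Q : K[X]}
    (hP : IsLinearized q P) (hQ : IsLinearized q Q) : IsLinearized q (P - Q) := by
  intro n hn
  by_cases hPn : P.coeff n = 0
  · exact hQ n fun hQn => hn (by rw [coeff_sub, hPn, hQn, sub_zero])
  · exact hP n hPn

variable {F K : Type*} [Field F] [Fintype F] [Field K] [Algebra F K] {P : K[X]}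

/-- The `F`-linear endomorphism `x ↦ P(x)` of `K` induced by a linearized polynomial `P`, where
linearity is relative to a subfield `F` with `q` elements. -/
noncomputable def evalLinearMap (hP : IsLinearized (Fintype.card F) P) : K →ₗ[F] K where
  toFun x := P.eval x
  map_add' x y := by
    simp only [eval_eq_sum, Polynomial.sum, ← Finset.sum_add_distrib]
    refine Finset.sum_congr rfl fun n hn => ?_
    obtain ⟨i, rfl⟩ := hP n (mem_support_iff.1 hn)
    have frobenius_pow (z : K) :
        (FiniteField.frobeniusAlgHom F K ^ i) z = z ^ Fintype.card F ^ i := by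
      rw [AlgHom.coe_pow, FiniteField.coe_frobeniusAlgHom, pow_iterate]
    rw [← mul_add, ← frobenius_pow, map_add, frobenius_pow, frobenius_pow]
  map_smul' c x := by
    simp only [eval_eq_sum, Polynomial.sum, Finset.smul_sum, RingHom.id_apply]
    refine Finset.sum_congr rfl fun n hn => ?_
    obtain ⟨i, rfl⟩ := hP n (mem_support_iff.1 hn)
    rw [_root_.smul_pow, FiniteField.pow_card_pow, mul_smul_comm]

theorem mem_ker_evalLinearMap (hP : IsLinearized (Fintype.card F) P) {x : K} :
    x ∈ hP.evalLinearMap.ker ↔ P.eval x = 0 :=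
  Iff.rfl

theorem coe_ker_evalLinearMap (hP : IsLinearized (Fintype.card F) P) (hP₀ : P ≠ 0) :
    (hP.evalLinearMap.ker : Set K) = P.rootSet K := by
  ext x
  rw [SetLike.mem_coe, mem_ker_evalLinearMap, mem_rootSet_of_ne hP₀, coe_aeval_eq_eval]

theorem finite_ker_evalLinearMap (hP : IsLinearized (Fintype.card F) P) (hP₀ : P ≠ 0) :
    Finite hP.evalLinearMap.ker :=
  (hP.coe_ker_evalLinearMap hP₀ ▸ rootSet_finite P K : (hP.evalLinearMap.ker : Set K).Finite)

theorem finrank_ker_evalLinearMap_lt (hP : IsLinearized (Fintype.card F) P) (hP₀ : P ≠ 0) {k : ℕ}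
    (hdeg : P.degree < ((Fintype.card F ^ k : ℕ) : WithBot ℕ)) :
    finrank F hP.evalLinearMap.ker < k := by
  have := hP.finite_ker_evalLinearMap hP₀
  refine (Nat.pow_lt_pow_iff_right (Fintype.one_lt_card (α := F))).1 ?_
  calc Fintype.card F ^ finrank F hP.evalLinearMap.ker
      = (P.rootSet K).ncard := by
        rw [← hP.coe_ker_evalLinearMap hP₀, ← Nat.card_coe_set_eq, ← Nat.card_eq_fintype_card]
        exact (natCard_eq_pow_finrank (K := F)).symm
    _ ≤ P.natDegree := ncard_rootSet_le P K
    _ < Fintype.card F ^ k := (natDegree_lt_iff_degree_lt hP₀).2 hdeg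

theorem card_lt_finrank_span_range_eval_add {ι : Type*} [Fintype ι] {α : ι → K}
    (hP : IsLinearized (Fintype.card F) P) (hP₀ : P ≠ 0) {k : ℕ}
    (hdeg : P.degree < ((Fintype.card F ^ k : ℕ) : WithBot ℕ)) (hα : LinearIndependent F α) :
    Fintype.card ι < finrank F (span F (range fun i => P.eval (α i))) + k := by
  have := hP.finite_ker_evalLinearMap hP₀
  have := FiniteDimensional.span_of_finite F (finite_range α)
  calc Fintype.card ι = finrank F (span F (range α)) := (finrank_span_eq_card hα).symm
    _ ≤ finrank F ((span F (range α)).map hP.evalLinearMap) + finrank F hP.evalLinearMap.ker :=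
        finrank_le_finrank_map_add_finrank_ker _ _
    _ = finrank F (span F (range fun i => P.eval (α i))) + finrank F hP.evalLinearMap.ker := by
        rw [map_span, ← range_comp]; rfl
    _ < _ := Nat.add_lt_add_left (hP.finrank_ker_evalLinearMap_lt hP₀ hdeg) _

end IsLinearized

section Code

variable {ι K : Type*} [Field K] {s : ℕ} {α : ι → K} {f g : Fin s → K[X]}

/-- The codeword of the interleaved subspace code associated with the message polynomials `f` and
the code locators `α`: the span of the vectors `(α_i, f⁽¹⁾(α_i), …, f⁽ˢ⁾(α_i))`. -/
def interleavedCodeword (F : Type*) [Field F] [Algebra F K] (α : ι → K) (f : Fin s → K[X]) :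
    Submodule F (Fin (s + 1) → K) :=
  span F (range fun i => Fin.cons (α i) fun j => (f j).eval (α i))

theorem two_mul_finrank_span_range_eval_le_subspaceDist [Finite ι] {F : Type*} [Field F]
    [Algebra F K] (hα : LinearIndependent F α) (j : Fin s) :
    2 * finrank F (span F (range fun i => (f j - g j).eval (α i))) ≤
      subspaceDist (interleavedCodeword F α f) (interleavedCodeword F α g) := by
  set u : ι → Fin (s + 1) → K := fun i => Fin.cons (α i) fun j => (f j).eval (α i) with hu
  set v : ι → Fin (s + 1) → K := fun i => Fin.cons (α i) fun j => (g j).eval (α i) with hv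
  have hdist : subspaceDist (interleavedCodeword F α f) (interleavedCodeword F α g) =
      2 * finrank F (span F (range (u - v))) :=
    subspaceDist_span_range_eq (p := (LinearMap.proj 0 : (Fin (s + 1) → K) →ₗ[F] K))
      (u := u) (v := v) hα rfl
  have hproj : (span F (range (u - v))).map (LinearMap.proj j.succ) =
      span F (range fun i => (f j - g j).eval (α i)) := by
    rw [map_span, ← range_comp]
    congr 2 with i
    simp [hu, hv]
  have := FiniteDimensional.span_of_finite F (finite_range (u - v))
  rw [hdist, ← hproj]
  exact Nat.mul_le_mul_left 2 (finrank_map_le _ _)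

theorem subspaceDist_ge_of_ne_general [Fintype ι] {F : Type*} [Field F] [Fintype F] [Algebra F K]
    (hα : LinearIndependent F α) {k : Fin s → ℕ} (hk : ∀ j, k j ≤ Fintype.card ι)
    (hfl : ∀ j, IsLinearized (Fintype.card F) (f j))
    (hgl : ∀ j, IsLinearized (Fintype.card F) (g j))
    (hfd : ∀ j, (f j).degree < ((Fintype.card F ^ k j : ℕ) : WithBot ℕ))
    (hgd : ∀ j, (g j).degree < ((Fintype.card F ^ k j : ℕ) : WithBot ℕ)) (hne : f ≠ g) :
    2 * (Fintype.card ι - Finset.univ.sup k + 1) ≤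
      subspaceDist (interleavedCodeword F α f) (interleavedCodeword F α g) := by
  obtain ⟨j, hj⟩ := Function.ne_iff.1 hne
  have hrank := ((hfl j).sub (hgl j)).card_lt_finrank_span_range_eval_add (sub_ne_zero.2 hj)
    ((degree_sub_le _ _).trans_lt (max_lt (hfd j) (hgd j))) hα
  have hdist := two_mul_finrank_span_range_eval_le_subspaceDist (f := f) (g := g) hα j
  have hkj : k j ≤ Finset.univ.sup k := Finset.le_sup (Finset.mem_univ j)
  have hsup : Finset.univ.sup k ≤ Fintype.card ι := Finset.sup_le fun j _ => hk j
  omega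

end Code

/-- For any two tuples of message polynomials of the interleaved subspace code that
differ in at least one component, the associated codewords `V`, `V'` satisfy
`d_S(V,V') ≥ 2(n_t − max_j k⁽ʲ⁾ + 1)`. -/
theorem subspaceDist_ge_of_ne
    (Fq K : Type*) [Field Fq] [Fintype Fq] [Field K] [Algebra Fq K]
    (q m s nt : ℕ) (hq : Fintype.card Fq = q) (hm : 0 < m)
    (hK : Module.finrank Fq K = m) (hnt : nt ≤ m) (hs : 1 ≤ s)
    (α : Fin nt → K) (hα : LinearIndependent Fq α)
    (k : Fin s → ℕ) (hk : ∀ j, 1 ≤ k j ∧ k j < nt)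
    (f g : Fin s → Polynomial K)
    (hfl : ∀ j, IsLinearized q (f j)) (hgl : ∀ j, IsLinearized q (g j))
    (hfd : ∀ j, (f j).degree < ((q ^ k j : ℕ) : WithBot ℕ))
    (hgd : ∀ j, (g j).degree < ((q ^ k j : ℕ) : WithBot ℕ))
    (hne : f ≠ g) :
    2 * (nt - Finset.univ.sup k + 1) ≤
      subspaceDist
        (Submodule.span Fq
          (Set.range fun i : Fin nt =>
            (Fin.cons (α i) (fun j : Fin s => (f j).eval (α i)) : Fin (s + 1) → K)))
        (Submodule.span Fq
          (Set.range fun i : Fin nt =>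
            (Fin.cons (α i) (fun j : Fin s => (g j).eval (α i)) : Fin (s + 1) → K))) := by
  subst hq
  simpa only [Fintype.card_fin, interleavedCodeword] using subspaceDist_ge_of_ne_general hα
    (fun j => (Fintype.card_fin nt).symm ▸ (hk j).2.le) hfl hgl hfd hgd hne
end

section
/- Let s ≥ 1, n_r ≥ 1, k ≥ 1 and τ ≥ 0 be integers with (s+1)·τ < s·(n_r − k + 1), and let (x_i, r_i^{(1)}, …, r_i^{(s)}) ∈ F_{q^m}^{s+1} for 0 ≤ i < n_r be arbitrary. Then there exist linearized polynomials Q_0, Q_1, …, Q_s over F_{q^m}, not all zero, with deg_q(Q_0) < n_r − τ and deg_q(Q_j) < n_r − τ − (k − 1) for 1 ≤ j ≤ s, such that Q_0(x_i) + Q_1(r_i^{(1)}) + ⋯ + Q_s(r_i^{(s)}) = 0 for every i with 0 ≤ i < n_r. -/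
/-!
The coefficients of the `Q_j` are the unknowns of a homogeneous linear system over `K` with one
equation per received point, hence `n_r` equations. The condition `(s+1)·τ < s·(n_r − k + 1)`
makes the number of unknowns, `(n_r − τ) + s·(n_r − τ − (k−1))`, larger than that.
-/

section Linearized

open Polynomial Module

variable {K : Type*} [Field K] {q : ℕ}

theorem IsLinearized.zero : IsLinearized q (0 : K[X]) :=
  fun n hn => absurd (coeff_zero n) hn

theorem IsLinearized.add {P Q : K[X]} (hP : IsLinearized q P) (hQ : IsLinearized q Q) :
    IsLinearized q (P + Q) := by
  intro n hn
  by_cases hPn : P.coeff n = 0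
  · exact hQ n fun hQn => hn (by rw [coeff_add, hPn, hQn, add_zero])
  · exact hP n hPn

theorem IsLinearized.smul {P : K[X]} (a : K) (hP : IsLinearized q P) : IsLinearized q (a • P) :=
  fun n hn => hP n fun hPn => hn (by rw [coeff_smul, hPn, smul_zero])

theorem isLinearized_X_pow_pow (i : ℕ) : IsLinearized q (X ^ q ^ i : K[X]) :=
  fun _ hn => ⟨i, of_not_not fun h => hn (by rw [coeff_X_pow, if_neg h])⟩

/-- The space of linearized polynomials over `K` of `q`-degree less than `d`. The bound on the
`q`-degree is encoded as a bound `q ^ d` on the ordinary degree, which is equivalent for `1 < q`. -/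
def linearizedLT (K : Type*) [Field K] (q d : ℕ) : Submodule K K[X] where
  carrier := {P | IsLinearized q P ∧ P ∈ degreeLT K (q ^ d)}
  zero_mem' := ⟨.zero, zero_mem _⟩
  add_mem' hP hQ := ⟨hP.1.add hQ.1, add_mem hP.2 hQ.2⟩
  smul_mem' a _ hP := ⟨hP.1.smul a, Submodule.smul_mem _ a hP.2⟩

theorem mem_linearizedLT {d : ℕ} {P : K[X]} :
    P ∈ linearizedLT K q d ↔ IsLinearized q P ∧ P.degree < ((q ^ d : ℕ) : WithBot ℕ) :=
  and_congr_right' mem_degreeLT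

theorem linearizedLT_eq_span (hq : 1 < q) (d : ℕ) :
    linearizedLT K q d =
      Submodule.span K (Set.range fun i : Fin d => (X ^ q ^ (i : ℕ) : K[X])) := by
  apply le_antisymm
  · intro P hP
    obtain ⟨hlin, hdeg⟩ := mem_linearizedLT.1 hP
    rw [P.as_sum_support_C_mul_X_pow]
    refine Submodule.sum_mem _ fun n hn => ?_
    obtain ⟨i, rfl⟩ := hlin n (mem_support_iff.1 hn)
    have hi : i < d := (Nat.pow_lt_pow_iff_right hq).1 <| by
      exact_mod_cast (le_degree_of_mem_supp _ hn).trans_lt hdeg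
    rw [← smul_eq_C_mul]
    exact Submodule.smul_mem _ _ (Submodule.subset_span ⟨⟨i, hi⟩, rfl⟩)
  · rw [Submodule.span_le]
    rintro _ ⟨i, rfl⟩
    refine mem_linearizedLT.2 ⟨isLinearized_X_pow_pow _, ?_⟩
    rw [degree_X_pow]
    exact_mod_cast Nat.pow_lt_pow_right hq i.2

theorem finiteDimensional_linearizedLT (hq : 1 < q) (d : ℕ) :
    FiniteDimensional K (linearizedLT K q d) := by
  rw [linearizedLT_eq_span hq]
  exact FiniteDimensional.span_of_finite K (Set.finite_range _)

theorem linearIndependent_X_pow_pow (hq : 1 < q) (d : ℕ) :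
    LinearIndependent K fun i : Fin d => (X ^ q ^ (i : ℕ) : K[X]) := by
  have h := (basisMonomials K).linearIndependent.comp (fun i : Fin d => q ^ (i : ℕ))
    ((Nat.pow_right_injective hq).comp Fin.val_injective)
  simpa only [Function.comp_def, coe_basisMonomials, monomial_one_right_eq_X_pow] using h

theorem finrank_linearizedLT (hq : 1 < q) (d : ℕ) : finrank K (linearizedLT K q d) = d := by
  rw [linearizedLT_eq_span hq, finrank_span_eq_card (linearIndependent_X_pow_pow hq d),
    Fintype.card_fin]

theorem exists_ne_zero_forall_sum_eval_eq_zero {ι J : Type*} [Fintype ι] [Fintype J]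
    (V : J → Submodule K K[X]) [∀ j, FiniteDimensional K (V j)]
    (hV : Fintype.card ι < ∑ j, finrank K (V j)) (y : ι → J → K) :
    ∃ Q : J → K[X], Q ≠ 0 ∧ (∀ j, Q j ∈ V j) ∧ ∀ i, ∑ j, (Q j).eval (y i j) = 0 := by
  let evalSum : (∀ j, V j) →ₗ[K] ι → K :=
    LinearMap.pi fun i => ∑ j, leval (y i j) ∘ₗ (V j).subtype ∘ₗ LinearMap.proj j
  have hker : LinearMap.ker evalSum ≠ ⊥ := LinearMap.ker_ne_bot_of_finrank_lt <| by
    rwa [finrank_fintype_fun_eq_card, finrank_pi_fintype]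
  obtain ⟨Q, hQ, hQ_ne⟩ := Submodule.exists_mem_ne_zero_of_ne_bot hker
  refine ⟨fun j => Q j, fun h => hQ_ne ?_, fun j => (Q j).2, fun i => ?_⟩
  · exact funext fun j => Subtype.ext (congrFun h j)
  · simpa [evalSum] using congrFun (LinearMap.mem_ker.1 hQ) i

end Linearized

theorem lt_sub_add_mul_sub {s n k τ : ℕ} (hk : 1 ≤ k)
    (hτ : ((s : ℤ) + 1) * τ < s * ((n : ℤ) - k + 1)) :
    n < (n - τ) + s * (n - τ - (k - 1)) := by
  have hlt : (τ : ℤ) < n - k + 1 :=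
    lt_of_mul_lt_mul_left (by linarith) (Int.natCast_nonneg s)
  -- By `hlt`, neither natural-number subtraction truncates.
  have h₀ : ((n - τ : ℕ) : ℤ) = n - τ := by lia
  have h₁ : ((n - τ - (k - 1) : ℕ) : ℤ) = n - τ - k + 1 := by lia
  zify
  rw [h₀, h₁]
  linarith

theorem exists_interpolation_polynomial_general
    {K : Type*} [Field K] {q : ℕ} (hq : 1 < q)
    {s nr k τ : ℕ} (hk : 1 ≤ k) (hτ : ((s : ℤ) + 1) * τ < s * ((nr : ℤ) - k + 1))
    (x : Fin nr → K) (r : Fin nr → Fin s → K) :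
    ∃ (Q₀ : Polynomial K) (Q : Fin s → Polynomial K),
      ¬(Q₀ = 0 ∧ ∀ j, Q j = 0) ∧
      IsLinearized q Q₀ ∧ (∀ j, IsLinearized q (Q j)) ∧
      Q₀.degree < ((q ^ (nr - τ) : ℕ) : WithBot ℕ) ∧
      (∀ j, (Q j).degree < ((q ^ (nr - τ - (k - 1)) : ℕ) : WithBot ℕ)) ∧
      ∀ i : Fin nr, Q₀.eval (x i) + ∑ j : Fin s, (Q j).eval (r i j) = 0 := by
  let d : Fin (s + 1) → ℕ := Fin.cons (nr - τ) fun _ => nr - τ - (k - 1)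
  have := fun j => finiteDimensional_linearizedLT (K := K) hq (d j)
  have hcard : Fintype.card (Fin nr) < ∑ j, Module.finrank K (linearizedLT K q (d j)) := by
    simpa [finrank_linearizedLT hq, d, Fin.sum_univ_succ] using lt_sub_add_mul_sub hk hτ
  obtain ⟨Q, hQ_ne, hQ_mem, hQ_eval⟩ := exists_ne_zero_forall_sum_eval_eq_zero
    (fun j => linearizedLT K q (d j)) hcard fun i => Fin.cons (x i) (r i)
  have hQ := fun j => mem_linearizedLT.1 (hQ_mem j)
  refine ⟨Q 0, fun j => Q j.succ, fun ⟨h₀, h⟩ => hQ_ne (funext (Fin.cases h₀ h)),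
    (hQ 0).1, fun j => (hQ j.succ).1, (hQ 0).2, fun j => (hQ j.succ).2, fun i => ?_⟩
  simpa only [Fin.sum_univ_succ, Fin.cons_zero, Fin.cons_succ] using hQ_eval i

/-- Existence of a nonzero solution to the interpolation problem: if
`(s+1)·τ < s·(n_r − k + 1)`, then there are linearized polynomials
`Q₀, Q₁, …, Q_s`, not all zero, with `deg_q Q₀ < n_r − τ` and
`deg_q Q_j < n_r − τ − (k−1)`, vanishing on all received points. -/
theorem exists_interpolation_polynomial
    (K : Type*) [Field K] [Fintype K]
    (q m : ℕ) (hq : IsPrimePow q) (hm : 0 < m) (hcard : Fintype.card K = q ^ m)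
    (s nr k τ : ℕ) (hs : 1 ≤ s) (hnr : 1 ≤ nr) (hk : 1 ≤ k)
    (hτ : ((s : ℤ) + 1) * τ < s * ((nr : ℤ) - k + 1))
    (x : Fin nr → K) (r : Fin nr → Fin s → K) :
    ∃ (Q₀ : Polynomial K) (Q : Fin s → Polynomial K),
      ¬(Q₀ = 0 ∧ ∀ j, Q j = 0) ∧
      IsLinearized q Q₀ ∧ (∀ j, IsLinearized q (Q j)) ∧
      Q₀.degree < ((q ^ (nr - τ) : ℕ) : WithBot ℕ) ∧
      (∀ j, (Q j).degree < ((q ^ (nr - τ - (k - 1)) : ℕ) : WithBot ℕ)) ∧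
      ∀ i : Fin nr, Q₀.eval (x i) + ∑ j : Fin s, (Q j).eval (r i j) = 0 :=
  exists_interpolation_polynomial_general hq.one_lt hk hτ x r
end

section
/- Let s ≥ 1, k ≥ 1, and let D, t be integers with 1 ≤ D ≤ t ≤ m. Let x_0, …, x_{t−1} ∈ F_{q^m} be linearly independent over F_q, and let f^{(1)}, …, f^{(s)} be linearized polynomials over F_{q^m} with deg_q(f^{(j)}) < k. Suppose Q_0, Q_1, …, Q_s are linearized polynomials over F_{q^m} with deg_q(Q_0) < D and deg_q(Q_j) < D − (k − 1) for 1 ≤ j ≤ s, satisfying Q_0(x_i) + Σ_{j=1}^{s} Q_j(f^{(j)}(x_i)) = 0 for all 0 ≤ i < t. Then P(x) := Q_0(x) + Σ_{j=1}^{s} (Q_j ∘ f^{(j)})(x), where ∘ denotes polynomial composition (substitution of f^{(j)}(x) into Q_j), is the zero polynomial, i.e., all of its coefficients vanish. -/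
/-!
A linearized polynomial over `K` acts `F_q`-linearly on `K`, and so does
`P = Q₀ + ∑ j, Q j ∘ f j`. Vanishing at `t` independent points, `P` vanishes on their span, which
has `q ^ t` elements, whereas its degree is less than `q ^ D ≤ q ^ t`.
-/

open Polynomial

namespace IsLinearized

variable {K : Type*} [Field K] {P R : K[X]}

lemma exists_natDegree_eq_pow_of_degree_lt {q d : ℕ} (hq : 1 < q) (hP : IsLinearized q P)
    (hP₀ : P ≠ 0) (hPd : P.degree < (q ^ d : ℕ)) : ∃ i < d, P.natDegree = q ^ i := by
  obtain ⟨i, hi⟩ := hP P.natDegree (leadingCoeff_ne_zero.mpr hP₀)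
  rw [← natDegree_lt_iff_degree_lt hP₀, hi, Nat.pow_lt_pow_iff_right hq] at hPd
  exact ⟨i, hPd, hi⟩

lemma natDegree_le_of_degree_lt {q d : ℕ} (hq : 1 < q) (hP : IsLinearized q P)
    (hPd : P.degree < (q ^ (d + 1) : ℕ)) : P.natDegree ≤ q ^ d := by
  rcases eq_or_ne P 0 with rfl | hP₀
  · simp
  obtain ⟨i, hid, hi⟩ := hP.exists_natDegree_eq_pow_of_degree_lt hq hP₀ hPd
  exact hi.trans_le (Nat.pow_le_pow_right hq.le (Nat.le_of_lt_succ hid))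

/-- If `D ≤ d`, the truncated difference `D - d` is `0` and `hPD` forces `P = 0`. -/
lemma degree_comp_lt {q d D : ℕ} (hq : 1 < q) (hP : IsLinearized q P) (hR : IsLinearized q R)
    (hPD : P.degree < (q ^ (D - d) : ℕ)) (hRd : R.degree < (q ^ (d + 1) : ℕ)) :
    (P.comp R).degree < (q ^ D : ℕ) := by
  rcases eq_or_ne P 0 with rfl | hP₀
  · rw [zero_comp, degree_zero]
    exact WithBot.bot_lt_coe _
  obtain ⟨i, hiD, hi⟩ := hP.exists_natDegree_eq_pow_of_degree_lt hq hP₀ hPD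
  refine degree_le_natDegree.trans_lt (Nat.cast_lt.mpr ?_)
  calc (P.comp R).natDegree
      = q ^ i * R.natDegree := by rw [natDegree_comp, hi]
    _ ≤ q ^ i * q ^ d := Nat.mul_le_mul_left _ (hR.natDegree_le_of_degree_lt hq hRd)
    _ = q ^ (i + d) := (pow_add q i d).symm
    _ < q ^ D := Nat.pow_lt_pow_right hq (Nat.add_lt_of_lt_sub hiD)

variable {F : Type*} [Field F] [Fintype F] [Algebra F K]

lemma isLinearMap_eval (hP : IsLinearized (Fintype.card F) P) :
    IsLinearMap F (fun a => P.eval a) := by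
  have frobenius_pow (i : ℕ) (a : K) :
      (FiniteField.frobeniusAlgHom F K ^ i) a = a ^ Fintype.card F ^ i := by
    rw [AlgHom.coe_pow, FiniteField.coe_frobeniusAlgHom, pow_iterate]
  constructor
  · intro a b
    simp only [eval_eq_sum, Polynomial.sum, ← Finset.sum_add_distrib]
    refine Finset.sum_congr rfl fun n hn => ?_
    obtain ⟨i, rfl⟩ := hP n (mem_support_iff.mp hn)
    rw [← frobenius_pow, map_add, mul_add, frobenius_pow, frobenius_pow]
  · intro c a
    simp only [eval_eq_sum, Polynomial.sum, Finset.smul_sum]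
    refine Finset.sum_congr rfl fun n hn => ?_
    obtain ⟨i, rfl⟩ := hP n (mem_support_iff.mp hn)
    rw [← frobenius_pow, map_smul, mul_smul_comm, frobenius_pow]

end IsLinearized

lemma eq_zero_of_isLinearMap_eval_of_linearIndependent {F R ι : Type*} [Semiring F] [Fintype F]
    [CommRing R] [IsDomain R] [Module F R] [Fintype ι] {P : R[X]}
    (hP : IsLinearMap F (fun a => P.eval a)) {x : ι → R} (hx : LinearIndependent F x)
    (hPd : P.degree < (Fintype.card F ^ Fintype.card ι : ℕ)) (hPx : ∀ i, P.eval (x i) = 0) :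
    P = 0 := by
  classical
  have eval_combination (c : ι → F) : P.eval (Fintype.linearCombination F x c) = 0 := by
    change hP.mk' _ (Fintype.linearCombination F x c) = 0
    simp [Fintype.linearCombination_apply, hPx]
  refine eq_zero_of_degree_lt_of_eval_index_eq_zero Finset.univ
    hx.fintypeLinearCombination_injective.injOn ?_ fun c _ => eval_combination c
  rwa [Finset.card_univ, Fintype.card_fun]

section Interpolation

variable {F K κ : Type*} [Field F] [Fintype F] [Field K] [Algebra F K] [Fintype κ]
  {Q₀ : K[X]} {Q f : κ → K[X]}

lemma isLinearMap_eval_add_sum_comp (hQ₀ : IsLinearized (Fintype.card F) Q₀)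
    (hQ : ∀ j, IsLinearized (Fintype.card F) (Q j))
    (hf : ∀ j, IsLinearized (Fintype.card F) (f j)) :
    IsLinearMap F (fun a => (Q₀ + ∑ j, (Q j).comp (f j)).eval a) := by
  convert (hQ₀.isLinearMap_eval.mk' _ +
    ∑ j, (hQ j).isLinearMap_eval.mk' _ ∘ₗ (hf j).isLinearMap_eval.mk' _).isLinear
  simp [eval_finsetSum]

theorem interpolation_poly_comp_eq_zero_general {ι : Type*} [Fintype ι] {d : κ → ℕ}
    {D : ℕ} (hD : D ≤ Fintype.card ι) {x : ι → K} (hx : LinearIndependent F x)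
    (hf : ∀ j, IsLinearized (Fintype.card F) (f j))
    (hfd : ∀ j, (f j).degree < (Fintype.card F ^ (d j + 1) : ℕ))
    (hQ₀ : IsLinearized (Fintype.card F) Q₀) (hQ : ∀ j, IsLinearized (Fintype.card F) (Q j))
    (hQ₀D : Q₀.degree < (Fintype.card F ^ D : ℕ))
    (hQD : ∀ j, (Q j).degree < (Fintype.card F ^ (D - d j) : ℕ))
    (heval : ∀ i, Q₀.eval (x i) + ∑ j, (Q j).eval ((f j).eval (x i)) = 0) :
    Q₀ + ∑ j, (Q j).comp (f j) = 0 := by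
  have hq : 1 < Fintype.card F := Fintype.one_lt_card
  have hdeg : (Q₀ + ∑ j, (Q j).comp (f j)).degree < (Fintype.card F ^ D : ℕ) :=
    mem_degreeLT.mp <| Submodule.add_mem _ (mem_degreeLT.mpr hQ₀D) <|
      Submodule.sum_mem _ fun j _ =>
        mem_degreeLT.mpr ((hQ j).degree_comp_lt hq (hf j) (hQD j) (hfd j))
  refine eq_zero_of_isLinearMap_eval_of_linearIndependent
    (isLinearMap_eval_add_sum_comp hQ₀ hQ hf) hx (hdeg.trans_le ?_) fun i => ?_
  · exact Nat.cast_le.mpr (Nat.pow_le_pow_right hq.le hD)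
  · simpa only [eval_add, eval_finsetSum, eval_comp] using heval i

end Interpolation

/-- If the interpolation polynomial vanishes on `t ≥ D` linearly independent points
evaluated at the message polynomials, then
`P(x) = Q₀(x) + Σ_j (Q_j ∘ f⁽ʲ⁾)(x)` is the zero polynomial. -/
theorem interpolation_poly_comp_eq_zero
    (Fq K : Type*) [Field Fq] [Fintype Fq] [Field K] [Algebra Fq K]
    (q m : ℕ) (hq : Fintype.card Fq = q) (hm : 0 < m) (hK : Module.finrank Fq K = m)
    (s k D t : ℕ) (hs : 1 ≤ s) (hk : 1 ≤ k) (hD : 1 ≤ D) (hDt : D ≤ t) (htm : t ≤ m)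
    (x : Fin t → K) (hx : LinearIndependent Fq x)
    (f : Fin s → Polynomial K)
    (hfl : ∀ j, IsLinearized q (f j))
    (hfd : ∀ j, (f j).degree < ((q ^ k : ℕ) : WithBot ℕ))
    (Q₀ : Polynomial K) (Q : Fin s → Polynomial K)
    (hQ₀l : IsLinearized q Q₀) (hQl : ∀ j, IsLinearized q (Q j))
    (hQ₀d : Q₀.degree < ((q ^ D : ℕ) : WithBot ℕ))
    (hQd : ∀ j, (Q j).degree < ((q ^ (D - (k - 1)) : ℕ) : WithBot ℕ))
    (heval : ∀ i : Fin t,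
      Q₀.eval (x i) + ∑ j : Fin s, (Q j).eval ((f j).eval (x i)) = 0) :
    Q₀ + ∑ j : Fin s, (Q j).comp (f j) = 0 := by
  subst hq
  obtain ⟨d, rfl⟩ := Nat.exists_eq_add_of_le' hk
  exact interpolation_poly_comp_eq_zero_general (by simpa using hDt) hx hfl hfd hQ₀l hQl hQ₀d
    hQd heval
end

section
/- Let s ≥ 1, and let n_r, τ, k, γ be integers with 1 ≤ k ≤ n_r − τ and 0 ≤ γ ≤ n_r. Let x_i, r_i^{(1)}, …, r_i^{(s)} ∈ F_{q^m} for 0 ≤ i < n_r, and let R be the n_r × ((n_r−τ) + s(n_r−τ−k+1)) matrix over F_{q^m} whose i-th row is ( x_i^{q^0}, …, x_i^{q^{n_r−τ−1}}, (r_i^{(1)})^{q^0}, …, (r_i^{(1)})^{q^{n_r−τ−k}}, …, (r_i^{(s)})^{q^0}, …, (r_i^{(s)})^{q^{n_r−τ−k}} ). If there exist linearized polynomials f^{(1)},…,f^{(s)} over F_{q^m} with deg_q(f^{(j)}) < k such that r_i^{(j)} = f^{(j)}(x_i) for all 0 ≤ i < n_r − γ and all 1 ≤ j ≤ s, then rank(R)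 ≤ (n_r − τ) + γ, the rank taken over F_{q^m}. -/
/-!
A linearized polynomial is additive, and raising it to the power `q ^ b` keeps it linearized while
shifting its exponents `q ^ l` to `q ^ (b + l)`. On uncorrupted points every column of `R` belonging
to a received word is therefore a linear combination of the `n_r − τ` columns of `q`-powers of `x`,
so `R` differs from a matrix of rank at most `n_r − τ` in at most `γ` rows.
-/

open Finset Polynomial

theorem rank_le_rank_add_card_of_row_eq {K ι κ : Type*} [Field K] [Finite ι] [Fintype κ]
    {A B : Matrix ι κ K} (T : Finset ι) (h : ∀ i ∉ T, A.row i = B.row i) :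
    A.rank ≤ B.rank + #T := by
  classical
  rw [A.rank_eq_finrank_span_row, B.rank_eq_finrank_span_row]
  have hspan : Submodule.span K (Set.range A.row) ≤
      Submodule.span K (Set.range B.row) ⊔ Submodule.span K (T.image A.row : Set (κ → K)) := by
    rw [← Submodule.span_union, Submodule.span_le, Set.range_subset_iff]
    intro i
    refine Submodule.subset_span ?_
    by_cases hi : i ∈ T
    · exact .inr (mem_image_of_mem _ hi)
    · exact .inl ⟨i, (h i hi).symm⟩
  calc Module.finrank K (Submodule.span K (Set.range A.row))
    _ ≤ _ := Submodule.finrank_mono hspan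
    _ ≤ Module.finrank K (Submodule.span K (Set.range B.row)) +
          Module.finrank K (Submodule.span K (T.image A.row : Set (κ → K))) :=
      Submodule.finrank_add_le_finrank_add_finrank _ _
    _ ≤ Module.finrank K (Submodule.span K (Set.range B.row)) + #T := by
      gcongr
      exact (finrank_span_finset_le_card _).trans card_image_le

theorem card_filter_sub_le_val_le (n γ : ℕ) : #{i : Fin n | n - γ ≤ i} ≤ γ := by
  have h := card_filter_add_card_filter_not (s := univ) fun i : Fin n ↦ (i : ℕ) < n - γ
  simp only [Fin.card_filter_val_lt, not_lt, card_univ, Fintype.card_fin] at h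
  omega

theorem exists_expChar_pow_eq_of_card_eq_pow {K : Type*} [CommRing K] [IsDomain K] [Fintype K]
    {q m : ℕ} (hq : IsPrimePow q) (hcard : Fintype.card K = q ^ m) :
    ∃ p e : ℕ, ExpChar K p ∧ p ^ e = q := by
  obtain ⟨p, e, hp, -, rfl⟩ := (isPrimePow_nat_iff q).1 hq
  have : Fact p.Prime := ⟨hp⟩
  have : CharP K p := charP_of_card_eq_prime_pow (hcard.trans (pow_mul p e m).symm)
  exact ⟨p, e, inferInstance, rfl⟩

namespace IsLinearized

variable {K : Type*} [Field K] {q k : ℕ} {f : K[X]}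

theorem eval_eq_sum (hf : IsLinearized q f) (hq : 1 < q)
    (hfd : f.degree < ((q ^ k : ℕ) : WithBot ℕ)) (y : K) :
    f.eval y = ∑ l ∈ range k, f.coeff (q ^ l) * y ^ q ^ l := by
  have hsupp : f.support ⊆ (range k).image (q ^ ·) := by
    intro n hn
    obtain ⟨l, rfl⟩ := hf n (mem_support_iff.1 hn)
    have hlt : q ^ l < q ^ k := by exact_mod_cast (le_degree_of_mem_supp _ hn).trans_lt hfd
    exact mem_image_of_mem _ (mem_range.2 ((Nat.pow_lt_pow_iff_right hq).1 hlt))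
  rw [Polynomial.eval_eq_sum, sum_eq_of_subset (fun n a ↦ a * y ^ n) (fun _ ↦ zero_mul _) hsupp,
    sum_image (Nat.pow_right_injective hq).injOn]

theorem eval_pow_eq_sum {p e : ℕ} [ExpChar K p] (hf : IsLinearized q f) (hpe : p ^ e = q)
    (hq : 1 < q) (hfd : f.degree < ((q ^ k : ℕ) : WithBot ℕ)) (b : ℕ) (y : K) :
    f.eval y ^ q ^ b = ∑ l ∈ range k, f.coeff (q ^ l) ^ q ^ b * y ^ q ^ (b + l) := by
  rw [hf.eval_eq_sum hq hfd, ← hpe, ← pow_mul p e b, sum_pow_char_pow]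
  refine sum_congr rfl fun l _ ↦ ?_
  rw [mul_pow, ← pow_mul y, pow_mul p e b, ← pow_add, add_comm]

theorem eval_pow_mem_span {ι : Type*} {p e b n : ℕ} [ExpChar K p] (hf : IsLinearized q f)
    (hpe : p ^ e = q) (hq : 1 < q) (hfd : f.degree < ((q ^ k : ℕ) : WithBot ℕ))
    (hbn : b + k ≤ n) (x : ι → K) :
    (fun i ↦ f.eval (x i) ^ q ^ b) ∈
      Submodule.span K (Set.range fun a : Fin n ↦ x ^ q ^ (a : ℕ)) := by
  have hsum : (fun i ↦ f.eval (x i) ^ q ^ b) =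
      ∑ l ∈ range k, f.coeff (q ^ l) ^ q ^ b • x ^ q ^ (b + l) := by
    ext i
    simp [hf.eval_pow_eq_sum hpe hq hfd]
  rw [hsum]
  refine Submodule.sum_mem _ fun l hl ↦ Submodule.smul_mem _ _ (Submodule.subset_span ?_)
  have hl : l < k := mem_range.1 hl
  exact ⟨⟨b + l, by omega⟩, rfl⟩

end IsLinearized

/-- The interpolation matrix `R` of the points `x i` and received values `r i j`, with `n`
coefficients of `Q_0` and `d` coefficients of each further `Q_j`. The columns are indexed by
`Fin n ⊕ σ × Fin d`: the coefficient of `Q_0` or the pair of `j` and a coefficient of `Q_j`. -/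
def interpolationMatrix {K ι σ : Type*} [Monoid K] (q n d : ℕ) (x : ι → K) (r : ι → σ → K) :
    Matrix ι (Fin n ⊕ σ × Fin d) K :=
  .of fun i ↦ Sum.elim (fun a ↦ x i ^ q ^ (a : ℕ)) (fun c ↦ r i c.1 ^ q ^ (c.2 : ℕ))

section InterpolationMatrix

variable {K ι σ : Type*} [Field K] [Fintype σ] {p e q n d k : ℕ} [ExpChar K p] {f : σ → K[X]}

theorem rank_interpolationMatrix_eval_le (hpe : p ^ e = q) (hq : 1 < q) (hdk : d + k ≤ n + 1)
    (x : ι → K) (hfl : ∀ j, IsLinearized q (f j))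
    (hfd : ∀ j, (f j).degree < ((q ^ k : ℕ) : WithBot ℕ)) :
    (interpolationMatrix q n d x fun i j ↦ (f j).eval (x i)).rank ≤ n := by
  let V := Submodule.span K (Set.range fun a : Fin n ↦ x ^ q ^ (a : ℕ))
  have hcol : ∀ c, (interpolationMatrix q n d x fun i j ↦ (f j).eval (x i)).col c ∈ V := by
    rintro (a | ⟨j, b⟩)
    · exact Submodule.subset_span ⟨a, rfl⟩
    · exact (hfl j).eval_pow_mem_span hpe hq (hfd j) (by omega) x
  have : FiniteDimensional K V := .span_of_finite K (Set.finite_range _)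
  rw [Matrix.rank_eq_finrank_span_cols]
  calc Module.finrank K (Submodule.span K (Set.range (Matrix.col _)))
    _ ≤ Module.finrank K V :=
      Submodule.finrank_mono (Submodule.span_le.2 (Set.range_subset_iff.2 hcol))
    _ ≤ Fintype.card (Fin n) := finrank_range_le_card _
    _ = n := Fintype.card_fin n

theorem rank_interpolation_matrix_le_general [Finite ι] (hpe : p ^ e = q) (hq : 1 < q)
    (hdk : d + k ≤ n + 1) {x : ι → K} {r : ι → σ → K} (hfl : ∀ j, IsLinearized q (f j))
    (hfd : ∀ j, (f j).degree < ((q ^ k : ℕ) : WithBot ℕ))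
    (T : Finset ι) (hagree : ∀ i ∉ T, ∀ j, r i j = (f j).eval (x i)) :
    (interpolationMatrix q n d x r).rank ≤ n + #T := by
  have hrow : ∀ i ∉ T, (interpolationMatrix q n d x r).row i =
      (interpolationMatrix q n d x fun i j ↦ (f j).eval (x i)).row i := by
    intro i hi
    ext c
    cases c <;> simp [interpolationMatrix, hagree i hi]
  exact (rank_le_rank_add_card_of_row_eq T hrow).trans
    (Nat.add_le_add_right (rank_interpolationMatrix_eval_le hpe hq hdk x hfl hfd) _)

end InterpolationMatrix

/-- Rank of the interpolation matrix: if the first `n_r − γ` received points agree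
with evaluations of message polynomials of q-degree `< k`, then the interpolation
matrix `R` has rank at most `(n_r − τ) + γ`. -/
theorem rank_interpolation_matrix_le
    (K : Type*) [Field K] [Fintype K]
    (q m : ℕ) (hq : IsPrimePow q) (hm : 0 < m) (hcard : Fintype.card K = q ^ m)
    (s nr τ k γ : ℕ) (hs : 1 ≤ s) (hk : 1 ≤ k) (hkτ : k + τ ≤ nr) (hγ : γ ≤ nr)
    (x : Fin nr → K) (r : Fin nr → Fin s → K)
    (f : Fin s → Polynomial K)
    (hfl : ∀ j, IsLinearized q (f j))
    (hfd : ∀ j, (f j).degree < ((q ^ k : ℕ) : WithBot ℕ))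
    (hagree : ∀ i : Fin nr, (i : ℕ) < nr - γ → ∀ j, r i j = (f j).eval (x i)) :
    (Matrix.of fun (i : Fin nr) (c : Fin (nr - τ) ⊕ Fin s × Fin (nr - τ - k + 1)) =>
      Sum.elim (fun a : Fin (nr - τ) => x i ^ q ^ (a : ℕ)) (fun p : Fin s × Fin (nr - τ - k + 1) => r i p.1 ^ q ^ (p.2 : ℕ)) c).rank
      ≤ (nr - τ) + γ := by
  obtain ⟨p, e, _, hpe⟩ := exists_expChar_pow_eq_of_card_eq_pow hq hcard
  exact (rank_interpolation_matrix_le_general (r := r) hpe hq.one_lt (by omega) hfl hfd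
    {i | nr - γ ≤ i} fun i hi ↦ hagree i (by simpa only [mem_filter_univ, not_le] using hi)).trans
    (Nat.add_le_add_left (card_filter_sub_le_val_le nr γ) _)
end

section
/- Let d_I ≥ s ≥ 1, k ≥ 1, and L ≥ k be integers, and let q^{(h)}_{j,ℓ} ∈ F_{q^m} be given for 1 ≤ h ≤ d_I, 1 ≤ j ≤ s, 0 ≤ ℓ ≤ L−k. For each such ℓ let Q_ℓ denote the d_I × s matrix with (h,j) entry q^{(h)}_{j,ℓ}, and for an integer i let Q_ℓ^{[i]} denote the matrix obtained by applying the i-th power of the Frobenius automorphism x ↦ x^q of F_{q^m} entrywise (negative i via the inverse automorphism). Let Q be the (L·d_I) × (s·k) block matrix whose block in block-row a (0 ≤ a < L) and block-column b (0 ≤ b < k) equals Q_{a−b}^{[−a]} if 0 ≤ a−b ≤ L−k, and the zero d_I × s block otherwise. If rank(Q_{L−k}) = s, then rank(Q) = s·k, ranks over F_{q^m}. -/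
/-!
Keep only the block-rows `d, d + 1, …, d + k - 1` of `Q`, where `d = L - k` is the index of the
leading coefficients. What remains is a `k × k` block matrix that is block upper triangular, since
the block in position `(b + d, c)` vanishes for `c < b`. Its diagonal blocks are Frobenius twists of
`Q_d`, and a matrix of full column rank keeps it under field homomorphisms because they preserve the
identity `B * A = 1` satisfied by a left inverse. Block back substitution then shows that the
selected rows, hence `Q` itself, have trivial right kernel.
-/

open Matrix

theorem rank_eq_card_iff_mulVec_injective {m n R : Type*} [Fintype n] [CommSemiring R]
    [OrzechProperty R] [Nontrivial R] {A : Matrix m n R} :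
    A.rank = Fintype.card n ↔ Function.Injective A.mulVec := by
  rw [mulVec_injective_iff, linearIndependent_iff_card_eq_finrank_span,
    rank_eq_finrank_span_cols, Set.finrank, eq_comm]

theorem exists_mul_eq_one_of_mulVec_injective {m n K : Type*} [Fintype m] [Fintype n]
    [DecidableEq n] [Field K] {A : Matrix m n K} (hA : Function.Injective A.mulVec) :
    ∃ B : Matrix n m K, B * A = 1 := by
  classical
  obtain ⟨g, hg⟩ := (toLin' A).exists_leftInverse_of_injective (LinearMap.ker_eq_bot.mpr hA)
  refine ⟨LinearMap.toMatrix' g, toLin'.injective ?_⟩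
  rw [toLin'_mul, toLin'_toMatrix', hg, toLin'_one]

theorem mulVec_injective_of_mul_eq_one {m n R : Type*} [Fintype m] [Fintype n] [DecidableEq n]
    [Semiring R] {A : Matrix m n R} {B : Matrix n m R} (hBA : B * A = 1) :
    Function.Injective A.mulVec :=
  Function.LeftInverse.injective (g := B.mulVec) fun v => by
    rw [mulVec_mulVec, hBA, one_mulVec]

theorem mulVec_injective_map {m n K R : Type*} [Finite m] [Fintype n] [Field K] [Semiring R]
    {A : Matrix m n K} (hA : Function.Injective A.mulVec) (f : K →+* R) :
    Function.Injective (A.map f).mulVec := by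
  classical
  cases nonempty_fintype m
  obtain ⟨B, hBA⟩ := exists_mul_eq_one_of_mulVec_injective hA
  have hmap : B.map f * A.map f = 1 := by
    rw [← Matrix.map_mul, hBA, Matrix.map_one f f.map_zero f.map_one]
  exact mulVec_injective_of_mul_eq_one hmap

theorem comp_mulVec_apply {α β ι κ R : Type*} [Fintype β] [Fintype κ]
    [NonUnitalNonAssocSemiring R] (M : Matrix α β (Matrix ι κ R)) (v : β × κ → R) (a : α)
    (i : ι) :
    (comp α β ι κ R M *ᵥ v) (a, i) = ∑ b, (M a b *ᵥ fun j => v (b, j)) i :=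
  Fintype.sum_prod_type _

theorem comp_mulVec_injective_of_isUpperTriangular {β ι κ R : Type*} [LinearOrder β] [Fintype β]
    [Fintype κ] [NonUnitalNonAssocRing R] {M : Matrix β β (Matrix ι κ R)}
    (hM : M.IsUpperTriangular) (hdiag : ∀ b, Function.Injective (M b b).mulVec) :
    Function.Injective (comp β β ι κ R M).mulVec := by
  intro v w hvw
  have hblock : ∀ b, (fun j => v (b, j)) = fun j => w (b, j) := by
    intro b
    induction b using WellFoundedGT.induction with
    | ind b ih =>
      refine hdiag b (funext fun i => ?_)
      have hrow := congrFun hvw (b, i)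
      rw [comp_mulVec_apply, comp_mulVec_apply, ← sub_eq_zero, ← Finset.sum_sub_distrib,
        Fintype.sum_eq_single b] at hrow
      · exact sub_eq_zero.mp hrow
      · intro c hc
        rcases hc.lt_or_gt with hcb | hbc
        · simp [hM hcb]
        · rw [ih c hbc, sub_self]
  exact funext fun ⟨b, j⟩ => congrFun (hblock b) j

section RootFindingMatrix

variable {ι κ K R : Type*} [NonAssocSemiring K] [NonAssocSemiring R] {L k d : ℕ}

/-- The root-finding matrix, as a matrix of blocks, for the coefficient matrices `Q 0, …, Q d`.
The power of Frobenius applied to block-row `a` is replaced by an arbitrary homomorphism `τ a`;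
the conjunct `b ≤ a` guards the truncated subtraction. -/
def rootFindingMatrix (τ : Fin L → K →+* R) (Q : ℕ → Matrix ι κ K) (k d : ℕ) :
    Matrix (Fin L) (Fin k) (Matrix ι κ R) :=
  of fun a b => if (b : ℕ) ≤ a ∧ (a : ℕ) - b ≤ d then (Q (a - b)).map (τ a) else 0

theorem comp_rootFindingMatrix (τ : Fin L → K →+* R) (Q : ℕ → Matrix ι κ K) :
    comp _ _ _ _ R (rootFindingMatrix τ Q k d) = of fun (p : Fin L × ι) (c : Fin k × κ) =>
      if (c.1 : ℕ) ≤ p.1 ∧ (p.1 : ℕ) - c.1 ≤ d then τ p.1 (Q (p.1 - c.1) p.2 c.2) else 0 := by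
  ext p c
  simp only [comp_apply, rootFindingMatrix, of_apply]
  split_ifs <;> rfl

/-- The block-row `b + d`, in which the leading coefficients `Q d` occupy block-column `b`. -/
def leadingRow (hL : k + d ≤ L) (b : Fin k) : Fin L :=
  (b.addNat d).castLE hL

theorem rootFindingMatrix_leadingRow_self (τ : Fin L → K →+* R) (Q : ℕ → Matrix ι κ K)
    (hL : k + d ≤ L) (b : Fin k) :
    rootFindingMatrix τ Q k d (leadingRow hL b) b = (Q d).map (τ (leadingRow hL b)) := by
  have hsub : (leadingRow hL b : ℕ) - b = d := Nat.add_sub_cancel_left b d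
  rw [rootFindingMatrix, of_apply, hsub]
  exact if_pos ⟨Nat.le_add_right _ _, le_rfl⟩

theorem isUpperTriangular_rootFindingMatrix_submatrix_leadingRow
    (τ : Fin L → K →+* R) (Q : ℕ → Matrix ι κ K) (hL : k + d ≤ L) :
    ((rootFindingMatrix τ Q k d).submatrix (leadingRow hL) id).IsUpperTriangular := by
  intro b c hcb
  have hcb' : (c : ℕ) < b := hcb
  refine if_neg ?_
  simp only [leadingRow, Fin.val_castLE, Fin.val_addNat, id_eq]
  omega

end RootFindingMatrix

theorem rank_root_finding_matrix_general {ι κ K R : Type*} [Finite ι] [Fintype κ] [Field K]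
    [CommRing R] [Nontrivial R] {L k d : ℕ} (τ : Fin L → K →+* R) (Q : ℕ → Matrix ι κ K)
    (hL : k + d ≤ L) (hQ : (Q d).rank = Fintype.card κ) :
    (comp _ _ _ _ R (rootFindingMatrix τ Q k d)).rank = Fintype.card κ * k := by
  have hdiag (b : Fin k) :
      Function.Injective (rootFindingMatrix τ Q k d (leadingRow hL b) b).mulVec := by
    rw [rootFindingMatrix_leadingRow_self]
    exact mulVec_injective_map (rank_eq_card_iff_mulVec_injective.mp hQ) _
  have hselected := rank_eq_card_iff_mulVec_injective.mpr <|
    comp_mulVec_injective_of_isUpperTriangular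
      (isUpperTriangular_rootFindingMatrix_submatrix_leadingRow τ Q hL) hdiag
  have hcard : Fintype.card κ * k = Fintype.card (Fin k × κ) := by simp [mul_comm]
  rw [hcard]
  refine le_antisymm (rank_le_card_width _) (hselected.symm.trans_le ?_)
  exact rank_submatrix_le (comp _ _ _ _ R (rootFindingMatrix τ Q k d))
    (Prod.map (leadingRow hL) id) id

/-- If the matrix `Q_{L−k}` of leading coefficients has rank `s`, then the
root-finding block matrix `Q` has full rank `s·k`. -/
theorem rank_root_finding_matrix
    (K : Type*) [Field K] [Fintype K]
    (q m : ℕ) (hq : IsPrimePow q) (hm : 0 < m) (hcard : Fintype.card K = q ^ m)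
    (σ : RingAut K) (hσ : ∀ x : K, σ x = x ^ q)
    (dI s k L : ℕ) (hs : 1 ≤ s) (hds : s ≤ dI) (hk : 1 ≤ k) (hL : k ≤ L)
    (qc : Fin dI → Fin s → ℕ → K)
    (hrank : (Matrix.of fun (h : Fin dI) (j : Fin s) => qc h j (L - k)).rank = s) :
    (Matrix.of fun (p : Fin L × Fin dI) (c : Fin k × Fin s) =>
      if (c.1 : ℕ) ≤ (p.1 : ℕ) ∧ (p.1 : ℕ) - (c.1 : ℕ) ≤ L - k then
        (σ ^ (-((p.1 : ℕ) : ℤ))) (qc p.2 c.2 ((p.1 : ℕ) - (c.1 : ℕ)))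
      else 0).rank = s * k := by
  simpa only [comp_rootFindingMatrix, Fintype.card_fin] using!
    rank_root_finding_matrix_general (fun a : Fin L => ((σ ^ (-(a : ℤ)) : RingAut K) : K →+* K))
      (fun ℓ => of fun h j => qc h j ℓ) (Nat.add_sub_cancel' hL).le (by simpa using hrank)
end

section
/- Let s ≥ 1, k ≥ 1 and e ≥ 0 be integers. For each j ∈ {1,…,s} let Q^{(j)}_0, Q^{(j)}_1, …, Q^{(j)}_s be linearized polynomials over F_{q^m} such that deg_q(Q^{(j)}_j) = e (so the coefficient of x^{q^e} in Q^{(j)}_j is nonzero), deg_q(Q^{(j)}_{j'}) ≤ e for all j' < j, and deg_q(Q^{(j)}_{j'}) < e for all j' > j. Then there is at most one s-tuple (f^{(1)}, …, f^{(s)}) of linearized polynomials over F_{q^m} with deg_q(f^{(j)}) < k for all j such that, for every j ∈ {1,…,s}, the linearized polynomial Q^{(j)}_0(x) + Σ_{j'=1}^{s} (Q^{(j)}_{j'} ∘ f^{(j')})(x) is the zero polynomial. -/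
/-!
Since a linearized polynomial acts additively under composition, the difference `h = f - g` of two
roots solves the homogeneous system `∑ i, Q j i ∘ h i = 0`. Let `j` be the first index at which
`deg (h j)` is maximal. In the `j`-th equation the diagonal term has degree
`q ^ e * deg (h j)`. Terms before it have `deg (Q j i) ≤ q ^ e` but `deg (h i) < deg (h j)`, terms
after it have `deg (Q j i) < q ^ e` and `deg (h i) ≤ deg (h j)`, so nothing can cancel the diagonal
term unless `deg (h j) = 0`. Hence every `h i` is constant, and linearized polynomials have no
constant term.
-/

open Polynomial

theorem exists_first_argmax {ι α : Type*} [LinearOrder ι] [Finite ι] [Nonempty ι] [LinearOrder α]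
    (d : ι → α) : ∃ j, (∀ i, d i ≤ d j) ∧ ∀ i < j, d i < d j := by
  obtain ⟨j, hj⟩ := Finite.exists_max fun i => toLex (d i, OrderDual.toDual i)
  have key (i : ι) : d i < d j ∨ d i = d j ∧ j ≤ i := Prod.Lex.toLex_le_toLex.mp (hj i)
  exact ⟨j, fun i => (key i).elim le_of_lt fun h => h.1.le,
    fun i hij => (key i).resolve_right fun h => hij.not_ge h.2⟩

theorem natDegree_lt_of_degree_lt_of_pos {R : Type*} [Semiring R] {P : R[X]} {n : ℕ} (hn : 0 < n)
    (hP : P.degree < n) : P.natDegree < n :=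
  (WithBot.unbotD_lt_iff fun _ => hn).mpr hP

theorem natDegree_sum_eq_of_forall_ne_natDegree_lt {R ι : Type*} [Semiring R] {s : Finset ι}
    {P : ι → R[X]} {j : ι} (hj : j ∈ s)
    (hlt : ∀ i ∈ s, i ≠ j → (P i).natDegree < (P j).natDegree) :
    (∑ i ∈ s, P i).natDegree = (P j).natDegree := by
  classical
  rw [← Finset.add_sum_erase s P hj]
  rcases (s.erase j).eq_empty_or_nonempty with hempty | hne
  · rw [hempty, Finset.sum_empty, add_zero]
  · refine natDegree_add_eq_left_of_natDegree_lt ?_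
    refine Finset.sum_induction_nonempty P (fun p => p.natDegree < (P j).natDegree)
      (fun p r hp hr => (natDegree_add_le p r).trans_lt (max_lt hp hr)) hne fun i hi => ?_
    exact hlt i (Finset.mem_of_mem_erase hi) (Finset.ne_of_mem_erase hi)

theorem natDegree_eq_zero_of_natDegree_sum_comp_eq_zero {R ι : Type*} [Semiring R]
    [NoZeroDivisors R] [LinearOrder ι] [Fintype ι] {N : ℕ} (hN : 0 < N) {Q : ι → ι → R[X]}
    (hdiag : ∀ j, (Q j j).natDegree = N) (hlow : ∀ j i, i < j → (Q j i).natDegree ≤ N)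
    (hup : ∀ j i, j < i → (Q j i).natDegree < N) {h : ι → R[X]}
    (hsum : ∀ j, (∑ i, (Q j i).comp (h i)).natDegree = 0) (i : ι) : (h i).natDegree = 0 := by
  have : Nonempty ι := ⟨i⟩
  obtain ⟨j, hmax, hfirst⟩ := exists_first_argmax fun i => (h i).natDegree
  suffices hj : (h j).natDegree = 0 from Nat.eq_zero_of_le_zero (hj ▸ hmax i)
  by_contra hj
  have hdom (i : ι) (hij : i ≠ j) :
      ((Q j i).comp (h i)).natDegree < ((Q j j).comp (h j)).natDegree := by
    rw [natDegree_comp, natDegree_comp, hdiag]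
    rcases hij.lt_or_gt with hlt | hgt
    · exact Nat.mul_lt_mul_of_le_of_lt (hlow j i hlt) (hfirst i hlt) hN
    · exact Nat.mul_lt_mul_of_lt_of_le (hup j i hgt) (hmax i) (Nat.pos_of_ne_zero hj)
  have hprod : N * (h j).natDegree = 0 := by
    rw [← hdiag j, ← natDegree_comp,
      ← natDegree_sum_eq_of_forall_ne_natDegree_lt (Finset.mem_univ j) fun i _ => hdom i, hsum]
  exact (Nat.mul_pos hN (Nat.pos_of_ne_zero hj)).ne' hprod

namespace IsLinearized

variable {K : Type*} [Field K] {q : ℕ} {P : K[X]}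

theorem coeff_zero_eq_zero (hP : IsLinearized q P) (hq : q ≠ 0) : P.coeff 0 = 0 := by
  by_contra hne
  obtain ⟨i, hi⟩ := hP 0 hne
  exact pow_ne_zero i hq hi.symm

theorem comp_sub {p a : ℕ} [ExpChar K p] (hP : IsLinearized (p ^ a) P) (f g : K[X]) :
    P.comp (f - g) = P.comp f - P.comp g := by
  simp only [comp, eval₂_eq_sum, sum_def, ← Finset.sum_sub_distrib]
  refine Finset.sum_congr rfl fun n hn => ?_
  obtain ⟨i, rfl⟩ := hP n (mem_support_iff.mp hn)
  rw [← pow_mul, sub_pow_expChar_pow, mul_sub]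

end IsLinearized

theorem unique_root_of_y_minimal_polys_general {K ι : Type*} [Field K] [LinearOrder ι] [Fintype ι]
    {p a e : ℕ} [ExpChar K p] {Q₀ : ι → K[X]} {Q : ι → ι → K[X]}
    (hQ : ∀ j i, IsLinearized (p ^ a) (Q j i))
    (hdiag : ∀ j, (Q j j).degree = (((p ^ a) ^ e : ℕ) : WithBot ℕ))
    (hlow : ∀ j i, i < j → (Q j i).degree ≤ (((p ^ a) ^ e : ℕ) : WithBot ℕ))
    (hup : ∀ j i, j < i → (Q j i).degree < (((p ^ a) ^ e : ℕ) : WithBot ℕ))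
    {f g : ι → K[X]} (hcoeff : ∀ j, (f j).coeff 0 = (g j).coeff 0)
    (hf : ∀ j, Q₀ j + ∑ i, (Q j i).comp (f i) = 0)
    (hg : ∀ j, Q₀ j + ∑ i, (Q j i).comp (g i) = 0) : f = g := by
  have hN : 0 < (p ^ a) ^ e := Nat.pow_pos (Nat.pow_pos (expChar_pos K p))
  have hsum (j : ι) : ∑ i, (Q j i).comp (f i - g i) = 0 := by
    simp only [(hQ j _).comp_sub, Finset.sum_sub_distrib]
    exact sub_eq_zero.mpr (add_left_cancel ((hf j).trans (hg j).symm))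
  have hconst : ∀ i, (f i - g i).natDegree = 0 :=
    natDegree_eq_zero_of_natDegree_sum_comp_eq_zero hN
      (fun j => natDegree_eq_of_degree_eq_some (hdiag j))
      (fun j i hij => natDegree_le_of_degree_le (hlow j i hij))
      (fun j i hij => natDegree_lt_of_degree_lt_of_pos hN (hup j i hij))
      (fun j => by rw [hsum j, natDegree_zero])
  funext i
  rw [← sub_eq_zero, eq_C_of_natDegree_eq_zero (hconst i), coeff_sub, hcoeff, sub_self, C_0]

/-- Uniqueness of the roots of a system of `y_j`-minimal interpolation polynomials:
if for every `j` the polynomial `Q⁽ʲ⁾_j` has q-degree exactly `e`, the `Q⁽ʲ⁾_{j'}`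
with `j' < j` have q-degree at most `e`, and those with `j' > j` have q-degree
strictly less than `e`, then there is at most one tuple `(f⁽¹⁾,…,f⁽ˢ⁾)` of linearized
polynomials of q-degree `< k` with `Q⁽ʲ⁾₀ + Σ_{j'} Q⁽ʲ⁾_{j'} ∘ f⁽ʲ'⁾ = 0` for all `j`. -/
theorem unique_root_of_y_minimal_polys
    (K : Type*) [Field K] [Fintype K]
    (q m : ℕ) (hq : IsPrimePow q) (hm : 0 < m) (hcard : Fintype.card K = q ^ m)
    (s k e : ℕ) (hs : 1 ≤ s) (hk : 1 ≤ k)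
    (Q₀ : Fin s → Polynomial K) (Qy : Fin s → Fin s → Polynomial K)
    (hQ₀l : ∀ j, IsLinearized q (Q₀ j))
    (hQyl : ∀ j j', IsLinearized q (Qy j j'))
    (hdiag : ∀ j, (Qy j j).degree = ((q ^ e : ℕ) : WithBot ℕ))
    (hlow : ∀ j j' : Fin s, j' < j → (Qy j j').degree ≤ ((q ^ e : ℕ) : WithBot ℕ))
    (hup : ∀ j j' : Fin s, j < j' → (Qy j j').degree < ((q ^ e : ℕ) : WithBot ℕ)) :
    ∀ f g : Fin s → Polynomial K,
      (∀ j, IsLinearized q (f j)) → (∀ j, (f j).degree < ((q ^ k : ℕ) : WithBot ℕ)) →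
      (∀ j, IsLinearized q (g j)) → (∀ j, (g j).degree < ((q ^ k : ℕ) : WithBot ℕ)) →
      (∀ j, Q₀ j + ∑ j' : Fin s, (Qy j j').comp (f j') = 0) →
      (∀ j, Q₀ j + ∑ j' : Fin s, (Qy j j').comp (g j') = 0) →
      f = g := by
  intro f g hf _ hg _ hfroot hgroot
  obtain ⟨p, a, hp, -, rfl⟩ := hq
  have : Fact p.Prime := ⟨hp.nat_prime⟩
  have : CharP K p := charP_of_card_eq_prime_pow (hcard.trans (pow_mul p a m).symm)
  have hq0 : p ^ a ≠ 0 := pow_ne_zero a hp.ne_zero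
  exact unique_root_of_y_minimal_polys_general hQyl hdiag hlow hup
    (fun j => ((hf j).coeff_zero_eq_zero hq0).trans ((hg j).coeff_zero_eq_zero hq0).symm)
    hfroot hgroot
end
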